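/- Let F be an algebraically closed field with characteristic ≠ 2 and ≠ 3, and let b ∈ F with b ≠ 0. Then the derivation algebra of the algebra E2(b) with MSC [[1,0,0,b],[1,0,0,0]] is zero: Der(E2(b)) = {0}. -/

import Mathlib

open Matrix Kronecker

variable {F : Type*}

/-- The Kronecker (tensor) product of two `2 × 2` matrices, realized as a `4 × 4` matrix;
rows/columns are indexed in row-major order by the pairs `(1,1), (1,2), (2,1), (2,2)`. -/
def kron [CommRing F] (g h : Matrix (Fin 2) (Fin 2) F) : Matrix (Fin 4) (Fin 4) F :=
  Matrix.reindex finProdFinEquiv finProdFinEquiv (g ⊗ₖ h)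

/-- Two `2`-dimensional algebras given by matrices of structure constants `A, B`
are isomorphic iff `B = g · A · (g⁻¹ ⊗ g⁻¹)` for some `g ∈ GL(2, F)`. -/
def Isomorphic [Field F] (A B : Matrix (Fin 2) (Fin 4) F) : Prop :=
  ∃ g : GL (Fin 2) F,
    B = (g : Matrix (Fin 2) (Fin 2) F) * A *
        kron ((↑(g⁻¹) : Matrix (Fin 2) (Fin 2) F)) ((↑(g⁻¹) : Matrix (Fin 2) (Fin 2) F))

/-- The automorphism group of the algebra with MSC `E`, as a set of (invertible) `2 × 2`
matrices: `Aut(E) = {g ∈ GL(2,F) : g·E = E·(g ⊗ g)}`. -/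
def Aut [Field F] (E : Matrix (Fin 2) (Fin 4) F) : Set (Matrix (Fin 2) (Fin 2) F) :=
  {g | IsUnit g ∧ g * E = E * kron g g}

/-- The derivation algebra of the algebra with MSC `E`:
`Der(E) = { D : E·(D ⊗ I + I ⊗ D) = D·E }`. -/
def Der [Field F] (E : Matrix (Fin 2) (Fin 4) F) : Set (Matrix (Fin 2) (Fin 2) F) :=
  {D | E * (kron D 1 + kron 1 D) = D * E}

/-!
A matrix lies in the derivation algebra exactly when it satisfies the Leibniz rule. For `E₂(b)` two
instances of the rule suffice: writing `D e₁ = p e₁ + r e₂` and `D e₂ = q e₁ + s e₂`, the product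
`e₁e₁ = e₁ + e₂` gives `p + q = r + s = 2p`, and `e₁e₂ = 0` gives `q + b r = q = 0`.
-/

section CommRing

variable {R : Type*} [CommRing R]

/-- The Kronecker (tensor) product `u ⊗ v` of two vectors of length `2`, with coordinates ordered
in the same way as the rows and columns of `kron`. -/
def kronVec (u v : Fin 2 → R) : Fin 4 → R := fun k =>
  let p : Fin 2 × Fin 2 := finProdFinEquiv.symm k
  u p.1 * v p.2

/-- The product `u · v = E (u ⊗ v)` of the algebra with matrix of structure constants `E`. -/
def mscMul (E : Matrix (Fin 2) (Fin 4) R) (u v : Fin 2 → R) : Fin 2 → R :=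
  E *ᵥ kronVec u v

/-- The matrix of structure constants of the algebra `E₂(b)`, in which `e₁e₁ = e₁ + e₂`,
`e₂e₂ = b e₁` and `e₁e₂ = e₂e₁ = 0`. -/
def E2 (b : R) : Matrix (Fin 2) (Fin 4) R := !![1, 0, 0, b; 1, 0, 0, 0]

theorem kron_mulVec_kronVec (g h : Matrix (Fin 2) (Fin 2) R) (u v : Fin 2 → R) :
    kron g h *ᵥ kronVec u v = kronVec (g *ᵥ u) (h *ᵥ v) := by
  funext k
  have sum_pairs (f : Fin 4 → R) : ∑ l, f l = ∑ p : Fin 2 × Fin 2, f (finProdFinEquiv p) :=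
    ((finProdFinEquiv (m := 2) (n := 2)).sum_comp f).symm
  simp only [mulVec, dotProduct, sum_pairs, kronVec, kron, reindex_apply, submatrix_apply,
    kroneckerMap_apply, Equiv.symm_apply_apply, Fintype.sum_prod_type, Finset.sum_mul_sum,
    mul_mul_mul_comm]

theorem kronVec_single_single (i j : Fin 2) :
    kronVec (Pi.single i 1) (Pi.single j 1) = Pi.single (finProdFinEquiv (i, j)) (1 : R) := by
  funext k
  obtain ⟨⟨i', j'⟩, rfl⟩ := (finProdFinEquiv (m := 2) (n := 2)).surjective k
  simp [kronVec, Pi.single_apply, ← ite_and, and_comm]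

theorem ext_of_mulVec_kronVec {A B : Matrix (Fin 2) (Fin 4) R}
    (h : ∀ u v, A *ᵥ kronVec u v = B *ᵥ kronVec u v) : A = B := by
  refine ext_of_mulVec_single fun k => ?_
  obtain ⟨⟨i, j⟩, rfl⟩ := (finProdFinEquiv (m := 2) (n := 2)).surjective k
  simpa only [kronVec_single_single] using h (Pi.single i 1) (Pi.single j 1)

theorem mul_kron_add_kron_eq_iff_leibniz (E : Matrix (Fin 2) (Fin 4) R)
    (D : Matrix (Fin 2) (Fin 2) R) :
    E * (kron D 1 + kron 1 D) = D * E ↔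
      ∀ u v, D *ᵥ mscMul E u v = mscMul E (D *ᵥ u) v + mscMul E u (D *ᵥ v) := by
  have mulVec_left (u v : Fin 2 → R) : (E * (kron D 1 + kron 1 D)) *ᵥ kronVec u v =
      mscMul E (D *ᵥ u) v + mscMul E u (D *ᵥ v) := by
    simp only [mscMul, ← mulVec_mulVec, add_mulVec, mulVec_add, kron_mulVec_kronVec, one_mulVec]
  have mulVec_right (u v : Fin 2 → R) : (D * E) *ᵥ kronVec u v = D *ᵥ mscMul E u v :=
    (mulVec_mulVec _ _ _).symm
  refine ⟨fun h u v => ?_, fun h => ext_of_mulVec_kronVec fun u v => ?_⟩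
  · rw [← mulVec_left, h, mulVec_right]
  · rw [mulVec_left, mulVec_right, h]

theorem mscMul_E2 (b : R) (u v : Fin 2 → R) :
    mscMul (E2 b) u v = ![u 0 * v 0 + b * (u 1 * v 1), u 0 * v 0] := by
  have kronVec_zero : kronVec u v 0 = u 0 * v 0 := rfl
  have kronVec_three : kronVec u v 3 = u 1 * v 1 := rfl
  funext i
  fin_cases i <;>
    simp [mscMul, E2, mulVec, dotProduct, Fin.sum_univ_four, kronVec_zero, kronVec_three]

open nonZeroDivisors in
theorem eq_zero_of_leibniz_E2 {b : R} (hb : b ∈ R⁰) {D : Matrix (Fin 2) (Fin 2) R}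
    (hD : ∀ u v, D *ᵥ mscMul (E2 b) u v = mscMul (E2 b) (D *ᵥ u) v + mscMul (E2 b) u (D *ᵥ v)) :
    D = 0 := by
  obtain ⟨h₀₀, h₁₁⟩ : D 0 1 = D 0 0 ∧ D 1 0 + D 1 1 = D 0 0 + D 0 0 := by
    simpa [mscMul_E2, mulVec, dotProduct] using hD ![1, 0] ![1, 0]
  obtain ⟨h₁₀, h₀₁⟩ : b * D 1 0 + D 0 1 = 0 ∧ D 0 1 = 0 := by
    simpa [eq_comm (a := (0 : R)), mscMul_E2, mulVec, dotProduct] using hD ![1, 0] ![0, 1]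
  rw [h₀₁, add_zero] at h₁₀
  replace h₁₀ : D 1 0 = 0 := (mul_left_mem_nonZeroDivisors_eq_zero_iff hb).mp h₁₀
  replace h₀₀ : D 0 0 = 0 := h₀₀.symm.trans h₀₁
  replace h₁₁ : D 1 1 = 0 := by simpa only [h₁₀, h₀₀, zero_add] using h₁₁
  ext i j
  fin_cases i <;> fin_cases j
  exacts [h₀₀, h₀₁, h₁₀, h₁₁]

end CommRing

theorem der_E2_of_ne_zero_general [Field F] {b : F} (hb : b ≠ 0) : Der (E2 b) = {0} := by
  refine Set.eq_singleton_iff_unique_mem.mpr ⟨?_, fun D hD => ?_⟩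
  · simp [Der, kron]
  · exact eq_zero_of_leibniz_E2 (mem_nonZeroDivisors_of_ne_zero hb)
      ((mul_kron_add_kron_eq_iff_leibniz _ _).mp hD)

theorem der_E2_of_ne_zero (F : Type*) [Field F] [IsAlgClosed F]
    (h2 : ringChar F ≠ 2) (h3 : ringChar F ≠ 3) (b : F) (hb : b ≠ 0) :
    Der (!![1, 0, 0, b; 1, 0, 0, 0] : Matrix (Fin 2) (Fin 4) F) = {0} :=
  der_E2_of_ne_zero_general hb
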